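/- A Cayley graph Cay(G,T), where T ⊆ G satisfies 1_G ∉ T and T = T^{(-1)}, is a (v,k,λ,μ)-strongly regular graph if and only if T is a regular (v,k,λ,μ)-partial difference set in G. -/

import Mathlib

open Finset Pointwise

def IsPDS {G : Type*} [Group G] [Fintype G] [DecidableEq G]
    (T : Finset G) (v k : ℕ) (l m : ℤ) : Prop :=
  Fintype.card G = v ∧ T.card = k ∧
    ∀ g : G, g ≠ 1 →
      ((((T ×ˢ T).filter fun p => p.1 ≠ p.2 ∧ p.1 * p.2⁻¹ = g)).card : ℤ) =
        if g ∈ T then l else m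

/-- The Cayley graph of `G` with connection set `T`: for `T` with `1 ∉ T` and `T⁻¹ = T`,
vertices `x` and `y` are adjacent iff `x * y⁻¹ ∈ T`. -/
def Cay {G : Type*} [Group G] [DecidableEq G] (T : Finset G) : SimpleGraph G :=
  SimpleGraph.fromRel (fun x y => x * y⁻¹ ∈ T)

instance {G : Type*} [Group G] [DecidableEq G] (T : Finset G) :
    DecidableRel (Cay T).Adj :=
  fun x y => decidable_of_iff (x ≠ y ∧ (x * y⁻¹ ∈ T ∨ y * x⁻¹ ∈ T)) Iff.rfl

/-! The neighbourhood of `x` in `Cay T` is the right translate `T <• x`, so `x` and `y` have as many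
common neighbours as `x * y⁻¹` has representations `t * u⁻¹` with `t, u ∈ T`. This number and the
adjacency of `x` and `y` depend only on the quotient `x * y⁻¹`, which ranges over all nonidentity
elements as `x ≠ y` vary: that is the partial difference set condition. -/

open scoped RightActions

section Group

variable {G : Type*} [Group G]

theorem forall_ne_mul_inv_iff {p : G → Prop} :
    (∀ x y : G, x ≠ y → p (x * y⁻¹)) ↔ ∀ g : G, g ≠ 1 → p g where
  mp h g hg := by simpa using h g 1 hg
  mpr h x y hxy := h (x * y⁻¹) (mul_inv_eq_one.not.mpr hxy)

variable [DecidableEq G]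

theorem card_op_smul_inter_op_smul (A B : Finset G) (x y : G) :
    #((A <• x) ∩ (B <• y)) = A⁻¹.convolution B (x * y⁻¹) := by
  rw [← card_inv, inv_inter, inv_op_smul_finset_distrib, inv_op_smul_finset_distrib,
    card_smul_inter_smul, inv_inv, inv_inv]

theorem card_ne_and_mul_inv_eq_convolution_inv (A B : Finset G) {g : G} (hg : g ≠ 1) :
    #{p ∈ A ×ˢ B | p.1 ≠ p.2 ∧ p.1 * p.2⁻¹ = g} = A.convolution B⁻¹ g := by
  have ne_of_mul_inv_eq (p : G × G) (hp : p.1 * p.2⁻¹ = g) : p.1 ≠ p.2 :=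
    mul_inv_eq_one.not.mp (hp ▸ hg)
  rw [← card_mul_inv_eq_convolution_inv]
  simp only [and_iff_right_of_imp (ne_of_mul_inv_eq _)]

theorem isPDS_iff_convolution [Fintype G] {T : Finset G} {v k : ℕ} {l m : ℤ} :
    IsPDS T v k l m ↔ Fintype.card G = v ∧ #T = k ∧
      ∀ g : G, g ≠ 1 → (T.convolution T⁻¹ g : ℤ) = if g ∈ T then l else m := by
  simp +contextual only [IsPDS, card_ne_and_mul_inv_eq_convolution_inv, ne_eq,
    not_false_eq_true]

end Group

theorem isSRGWith_iff_forall_ne {V : Type*} [Fintype V] {Γ : SimpleGraph V}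
    [DecidableRel Γ.Adj] {n k l m : ℕ} :
    Γ.IsSRGWith n k l m ↔ Fintype.card V = n ∧ Γ.IsRegularOfDegree k ∧
      ∀ x y, x ≠ y → Fintype.card (Γ.commonNeighbors x y) = if Γ.Adj x y then l else m where
  mp h := ⟨h.card, h.regular, fun x y hxy => by
    split_ifs with hadj
    · exact h.of_adj x y hadj
    · exact h.of_not_adj hxy hadj⟩
  mpr := fun ⟨hcard, hreg, hcommon⟩ =>
    { card := hcard
      regular := hreg
      of_adj := fun x y hadj => by rw [hcommon x y hadj.ne, if_pos hadj]
      of_not_adj := fun x y hxy hadj => by rw [hcommon x y hxy, if_neg hadj] }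

namespace Cay

variable {G : Type*} [Group G] [DecidableEq G] {T : Finset G}

theorem adj_iff (hone : 1 ∉ T) (hrev : T⁻¹ = T) {x y : G} :
    (Cay T).Adj x y ↔ x * y⁻¹ ∈ T := by
  have mem_swap : y * x⁻¹ ∈ T ↔ x * y⁻¹ ∈ T := by
    rw [← hrev, mem_inv', mul_inv_rev, inv_inv, hrev]
  have ne_of_mem (h : x * y⁻¹ ∈ T) : x ≠ y := by
    rintro rfl
    exact hone (by rwa [mul_inv_cancel] at h)
  rw [Cay, SimpleGraph.fromRel_adj, mem_swap, or_self, and_iff_right_of_imp ne_of_mem]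

theorem neighborSet_eq (hone : 1 ∉ T) (hrev : T⁻¹ = T) (x : G) :
    (Cay T).neighborSet x = ↑(T <• x) := by
  ext z
  rw [SimpleGraph.mem_neighborSet, SimpleGraph.adj_comm, adj_iff hone hrev, mem_coe,
    ← inv_smul_mem_iff, ← MulOpposite.op_inv, op_smul_eq_mul]

theorem degree_eq (hone : 1 ∉ T) (hrev : T⁻¹ = T) (x : G)
    [Fintype ((Cay T).neighborSet x)] : (Cay T).degree x = #T := by
  rw [← SimpleGraph.card_neighborSet_eq_degree, Fintype.card_eq_nat_card,
    neighborSet_eq hone hrev, Nat.card_coe_set_eq, Set.ncard_coe_finset, card_smul_finset]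

theorem isRegularOfDegree_iff [(Cay T).LocallyFinite] (hone : 1 ∉ T) (hrev : T⁻¹ = T) {k : ℕ} :
    (Cay T).IsRegularOfDegree k ↔ #T = k := by
  simp only [SimpleGraph.IsRegularOfDegree, degree_eq hone hrev, forall_const]

theorem card_commonNeighbors (hone : 1 ∉ T) (hrev : T⁻¹ = T) (x y : G)
    [Fintype ((Cay T).commonNeighbors x y)] :
    Fintype.card ((Cay T).commonNeighbors x y) = T.convolution T⁻¹ (x * y⁻¹) := by
  rw [Fintype.card_eq_nat_card, SimpleGraph.commonNeighbors_eq, neighborSet_eq hone hrev,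
    neighborSet_eq hone hrev, ← coe_inter, Nat.card_coe_set_eq, Set.ncard_coe_finset,
    card_op_smul_inter_op_smul, hrev]

end Cay

theorem cayley_srg_iff_pds {G : Type*} [Group G] [Fintype G] [DecidableEq G]
    (T : Finset G) (hone : (1 : G) ∉ T) (hrev : T⁻¹ = T)
    (v k : ℕ) (l m : ℕ) :
    (Cay T).IsSRGWith v k l m ↔ IsPDS T v k (l : ℤ) (m : ℤ) := by
  rw [isSRGWith_iff_forall_ne, Cay.isRegularOfDegree_iff hone hrev, isPDS_iff_convolution]
  simp only [Cay.card_commonNeighbors hone hrev, Cay.adj_iff hone hrev]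
  rw [forall_ne_mul_inv_iff (p := fun g => T.convolution T⁻¹ g = if g ∈ T then l else m)]
  norm_cast
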